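/- Let 𝔤 be a finite-dimensional complex simple Lie algebra with root system Φ, base Δ, highest root θ, and let α ∈ Δ be a long simple root such that n_α(θ) = 2 and θ is the unique root β ∈ Φ with n_α(β) = 2 (i.e. (𝔤,α) is of contact type). Set Σ_q := {α} ∪ N(α). Then ht_{Σ_q}(θ) = 5, i.e. the sum of the coefficients in θ of the Dynkin neighbors of α equals 3. -/

import Mathlib

open scoped RealInnerProductSpace Classical

/-!
Write `⟨β, α^∨⟩ = 2 (β, α) / (α, α)`. As `α` is long, each of its Dynkin neighbors pairs to `-1`
with `α^∨`, so expanding a root `β` in simple roots gives `⟨β, α^∨⟩ = 2 n_α(β) - ∑_{N(α)} n_γ(β)`,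
that is, `ht_{Σ_q}(β) = 3 n_α(β) - ⟨β, α^∨⟩`. It remains to see that `⟨θ, α^∨⟩ = 1`. A simple
reflection other than `s_α` preserves `n_α`, hence fixes `θ` by uniqueness; so `θ` is orthogonal to
all simple roots but `α`, and `(θ, θ) = n_α(θ) (θ, α) = ⟨θ, α^∨⟩ (α, α)`. This is positive and at
most `(α, α)`, which leaves only `1` for the integer `⟨θ, α^∨⟩`.
-/

section CartanPairing

variable {E : Type*} [NormedAddCommGroup E] [InnerProductSpace ℝ E]

/-- The pairing `⟨x, v^∨⟩` of a vector with the coroot of `v`, so that the reflection in `v` is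
`x ↦ x - cartanPairing x v • v`. It takes the junk value `0` at `v = 0`. -/
noncomputable def cartanPairing (x v : E) : ℝ :=
  2 * ⟪x, v⟫ / ⟪v, v⟫

theorem cartanPairing_mul_inner_self (x v : E) : cartanPairing x v * ⟪v, v⟫ = 2 * ⟪x, v⟫ := by
  by_cases hv : v = 0
  · simp [hv]
  · exact div_mul_cancel₀ _ (inner_self_ne_zero.2 hv)

theorem cartanPairing_self {v : E} (hv : v ≠ 0) : cartanPairing v v = 2 :=
  mul_div_cancel_right₀ 2 (inner_self_ne_zero.2 hv)

theorem cartanPairing_eq_zero_iff {x v : E} : cartanPairing x v = 0 ↔ ⟪x, v⟫ = 0 := by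
  refine ⟨fun h ↦ ?_, fun h ↦ by simp [cartanPairing, h]⟩
  simpa [h] using (cartanPairing_mul_inner_self x v).symm

theorem cartanPairing_sum_smul {ι : Type*} (s : Finset ι) (c : ι → ℝ) (w : ι → E) (v : E) :
    cartanPairing (∑ i ∈ s, c i • w i) v = ∑ i ∈ s, c i * cartanPairing (w i) v := by
  simp only [cartanPairing, sum_inner, real_inner_smul_left, Finset.mul_sum, Finset.sum_div]
  exact Finset.sum_congr rfl fun i _ ↦ by ring

theorem neg_two_lt_cartanPairing {x v : E} (hle : ⟪x, x⟫ ≤ ⟪v, v⟫) (hne : x ≠ -v) :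
    -2 < cartanPairing x v := by
  by_cases hv : v = 0
  · simp [cartanPairing, hv]
  have hadd : 0 < ⟪x + v, x + v⟫ := real_inner_self_pos.2 (mt eq_neg_of_add_eq_zero_left hne)
  rw [real_inner_add_add_self] at hadd
  rw [cartanPairing, lt_div_iff₀ (real_inner_self_pos.2 hv)]
  linarith

theorem inner_eq_zero_of_sub_cartanPairing_smul_eq_self {x v : E}
    (h : x - cartanPairing x v • v = x) : ⟪x, v⟫ = 0 := by
  rcases smul_eq_zero.1 (sub_eq_self.1 h) with hpair | hv
  · exact cartanPairing_eq_zero_iff.1 hpair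
  · rw [hv, inner_zero_right]

/-- The Dynkin neighbors `N(α)` of `α` in a set `Δ` of simple roots. -/
noncomputable def dynkinNeighbors (Δ : Finset E) (α : E) : Finset E :=
  Δ.filter fun γ => γ ≠ α ∧ ⟪γ, α⟫ ≠ 0

theorem mem_dynkinNeighbors {Δ : Finset E} {α γ : E} :
    γ ∈ dynkinNeighbors Δ α ↔ γ ∈ Δ ∧ γ ≠ α ∧ ⟪γ, α⟫ ≠ 0 :=
  Finset.mem_filter

theorem notMem_dynkinNeighbors_self (Δ : Finset E) (α : E) : α ∉ dynkinNeighbors Δ α :=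
  fun h ↦ (mem_dynkinNeighbors.1 h).2.1 rfl

theorem insert_dynkinNeighbors_subset {Δ : Finset E} {α : E} (hα : α ∈ Δ) :
    insert α (dynkinNeighbors Δ α) ⊆ Δ :=
  Finset.insert_subset hα (Finset.filter_subset _ _)

end CartanPairing

/-- `Δ` is a system of simple roots for `Φ`, and `n β γ` is the coefficient of `γ ∈ Δ` in `β ∈ Φ`
(its other values are junk). Weyl invariance of `Φ` is encoded as stability under the simple
reflections; integrality of the pairings with simple roots then comes from that of `n`. -/
structure IsSimpleSystem {E : Type*} [NormedAddCommGroup E] [InnerProductSpace ℝ E]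
    (Φ : Set E) (Δ : Finset E) (n : E → E → ℤ) : Prop where
  subset : (Δ : Set E) ⊆ Φ
  linearIndepOn : LinearIndepOn ℝ id (Δ : Set E)
  reflection_mem : ∀ δ ∈ Δ, ∀ β ∈ Φ, β - cartanPairing β δ • δ ∈ Φ
  eq_sum : ∀ β ∈ Φ, β = ∑ γ ∈ Δ, (n β γ : ℝ) • γ
  nonneg_or_nonpos : ∀ β ∈ Φ, (∀ γ ∈ Δ, 0 ≤ n β γ) ∨ (∀ γ ∈ Δ, n β γ ≤ 0)

namespace IsSimpleSystem

variable {E : Type*} [NormedAddCommGroup E] [InnerProductSpace ℝ E]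
  {Φ : Set E} {Δ : Finset E} {n : E → E → ℤ} {α β γ δ θ : E}

theorem ne_zero (h : IsSimpleSystem Φ Δ n) (hδ : δ ∈ Δ) : δ ≠ 0 :=
  h.linearIndepOn.ne_zero (Finset.mem_coe.2 hδ)

theorem coeff_eq_of_eq_sum (h : IsSimpleSystem Φ Δ n) (hβ : β ∈ Φ) {c : E → ℝ}
    (hc : β = ∑ γ ∈ Δ, c γ • γ) (hγ : γ ∈ Δ) : (n β γ : ℝ) = c γ :=
  linearIndepOn_finset_iffₛ.1 h.linearIndepOn (fun γ ↦ (n β γ : ℝ)) c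
    ((h.eq_sum β hβ).symm.trans hc) γ hγ

theorem coeff_smul (h : IsSimpleSystem Φ Δ n) (hδ : δ ∈ Δ) {t : ℝ} (ht : t • δ ∈ Φ)
    (hγ : γ ∈ Δ) : (n (t • δ) γ : ℝ) = if γ = δ then t else 0 :=
  h.coeff_eq_of_eq_sum ht (c := fun γ ↦ if γ = δ then t else 0) (by simp [ite_smul, hδ]) hγ

theorem coeff_simple (h : IsSimpleSystem Φ Δ n) (hδ : δ ∈ Δ) (hγ : γ ∈ Δ) :
    n δ γ = if γ = δ then 1 else 0 := by
  have hcoeff := h.coeff_smul hδ (t := 1) (by simpa using h.subset hδ) hγ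
  rw [one_smul] at hcoeff
  exact_mod_cast hcoeff

theorem coeff_reflection (h : IsSimpleSystem Φ Δ n) (hδ : δ ∈ Δ) (hβ : β ∈ Φ) (hγ : γ ∈ Δ) :
    (n (β - cartanPairing β δ • δ) γ : ℝ) =
      n β γ - if γ = δ then cartanPairing β δ else 0 := by
  refine h.coeff_eq_of_eq_sum (h.reflection_mem δ hδ β hβ)
    (c := fun γ ↦ n β γ - if γ = δ then cartanPairing β δ else 0) ?_ hγ
  simp only [sub_smul, Finset.sum_sub_distrib, ← h.eq_sum β hβ]
  simp [ite_smul, hδ]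

theorem coeff_reflection_of_ne (h : IsSimpleSystem Φ Δ n) (hδ : δ ∈ Δ) (hβ : β ∈ Φ)
    (hγ : γ ∈ Δ) (hne : γ ≠ δ) : n (β - cartanPairing β δ • δ) γ = n β γ := by
  have hcoeff := h.coeff_reflection hδ hβ hγ
  rw [if_neg hne, sub_zero] at hcoeff
  exact_mod_cast hcoeff

theorem cartanPairing_eq_coeff_sub_coeff_reflection (h : IsSimpleSystem Φ Δ n) (hδ : δ ∈ Δ)
    (hβ : β ∈ Φ) :
    cartanPairing β δ = ((n β δ - n (β - cartanPairing β δ • δ) δ : ℤ) : ℝ) := by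
  rw [Int.cast_sub, h.coeff_reflection hδ hβ hδ, if_pos rfl, sub_sub_cancel]

theorem exists_int_cartanPairing_eq (h : IsSimpleSystem Φ Δ n) (hδ : δ ∈ Δ) (hβ : β ∈ Φ) :
    ∃ m : ℤ, cartanPairing β δ = m :=
  ⟨_, h.cartanPairing_eq_coeff_sub_coeff_reflection hδ hβ⟩

theorem cartanPairing_nonpos (h : IsSimpleSystem Φ Δ n) (hγ : γ ∈ Δ) (hδ : δ ∈ Δ)
    (hne : γ ≠ δ) : cartanPairing γ δ ≤ 0 := by
  have hγΦ := h.subset hγ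
  have hcoeff_γ : n (γ - cartanPairing γ δ • δ) γ = 1 := by
    rw [h.coeff_reflection_of_ne hδ hγΦ hγ hne, h.coeff_simple hγ hγ, if_pos rfl]
  have hcoeff_δ : 0 ≤ n (γ - cartanPairing γ δ • δ) δ := by
    rcases h.nonneg_or_nonpos _ (h.reflection_mem δ hδ γ hγΦ) with hnonneg | hnonpos
    · exact hnonneg δ hδ
    · have := hnonpos γ hγ
      omega
  rw [h.cartanPairing_eq_coeff_sub_coeff_reflection hδ hγΦ, h.coeff_simple hγ hδ,
    if_neg hne.symm]
  exact Int.cast_nonpos.2 (by omega)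

theorem simple_ne_neg (h : IsSimpleSystem Φ Δ n) (hγ : γ ∈ Δ) (hδ : δ ∈ Δ) (hne : γ ≠ δ) :
    γ ≠ -δ := by
  intro heq
  have hsmul : (-1 : ℝ) • δ = γ := by rw [neg_one_smul, heq]
  have hcoeff := h.coeff_smul hδ (hsmul ▸ h.subset hγ) hγ
  rw [hsmul, h.coeff_simple hγ hγ, if_pos rfl, if_neg hne] at hcoeff
  norm_num at hcoeff

theorem cartanPairing_eq_neg_one (h : IsSimpleSystem Φ Δ n) (hα : α ∈ Δ)
    (hγ : γ ∈ dynkinNeighbors Δ α) (hlong : ⟪γ, γ⟫ ≤ ⟪α, α⟫) : cartanPairing γ α = -1 := by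
  obtain ⟨hγΔ, hne, hinner⟩ := mem_dynkinNeighbors.1 hγ
  have hlower := neg_two_lt_cartanPairing hlong (h.simple_ne_neg hγΔ hα hne)
  have hupper := h.cartanPairing_nonpos hγΔ hα hne
  have hne_zero := mt cartanPairing_eq_zero_iff.1 hinner
  obtain ⟨m, hm⟩ := h.exists_int_cartanPairing_eq hα (h.subset hγΔ)
  rw [hm] at hlower hupper hne_zero ⊢
  norm_cast at hlower hupper hne_zero ⊢
  omega

theorem cartanPairing_eq_two_mul_coeff_sub_sum_dynkinNeighbors (h : IsSimpleSystem Φ Δ n)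
    (hα : α ∈ Δ) (hlong : ∀ γ ∈ Δ, ⟪γ, γ⟫ ≤ ⟪α, α⟫) (hβ : β ∈ Φ) :
    cartanPairing β α = 2 * n β α - ∑ γ ∈ dynkinNeighbors Δ α, (n β γ : ℝ) := by
  have hvanish : ∀ γ ∈ Δ, γ ∉ insert α (dynkinNeighbors Δ α) →
      (n β γ : ℝ) * cartanPairing γ α = 0 := by
    intro γ hγ hnotMem
    rw [Finset.mem_insert, mem_dynkinNeighbors] at hnotMem
    rw [cartanPairing_eq_zero_iff.2 (by tauto), mul_zero]
  have hneighbors : ∀ γ ∈ dynkinNeighbors Δ α, (n β γ : ℝ) * cartanPairing γ α = -n β γ := by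
    intro γ hγ
    rw [h.cartanPairing_eq_neg_one hα hγ (hlong γ (mem_dynkinNeighbors.1 hγ).1), mul_neg_one]
  calc cartanPairing β α
      = cartanPairing (∑ γ ∈ Δ, (n β γ : ℝ) • γ) α := by rw [← h.eq_sum β hβ]
    _ = ∑ γ ∈ Δ, (n β γ : ℝ) * cartanPairing γ α := cartanPairing_sum_smul ..
    _ = ∑ γ ∈ insert α (dynkinNeighbors Δ α), (n β γ : ℝ) * cartanPairing γ α :=
      (Finset.sum_subset (insert_dynkinNeighbors_subset hα) hvanish).symm
    _ = 2 * n β α - ∑ γ ∈ dynkinNeighbors Δ α, (n β γ : ℝ) := by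
      rw [Finset.sum_insert (notMem_dynkinNeighbors_self Δ α), Finset.sum_congr rfl hneighbors,
        cartanPairing_self (h.ne_zero hα), Finset.sum_neg_distrib]
      ring

theorem sum_insert_dynkinNeighbors_coeff (h : IsSimpleSystem Φ Δ n) (hα : α ∈ Δ)
    (hlong : ∀ γ ∈ Δ, ⟪γ, γ⟫ ≤ ⟪α, α⟫) (hβ : β ∈ Φ) :
    ((∑ γ ∈ insert α (dynkinNeighbors Δ α), n β γ : ℤ) : ℝ) =
      3 * n β α - cartanPairing β α := by
  rw [h.cartanPairing_eq_two_mul_coeff_sub_sum_dynkinNeighbors hα hlong hβ,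
    Finset.sum_insert (notMem_dynkinNeighbors_self Δ α)]
  push_cast
  ring

theorem inner_eq_zero_of_unique_coeff (h : IsSimpleSystem Φ Δ n) (hα : α ∈ Δ) (hθ : θ ∈ Φ)
    (hunique : ∀ β ∈ Φ, n β α = n θ α → β = θ) (hγ : γ ∈ Δ) (hne : γ ≠ α) : ⟪θ, γ⟫ = 0 :=
  inner_eq_zero_of_sub_cartanPairing_smul_eq_self <|
    hunique _ (h.reflection_mem γ hγ θ hθ) (h.coeff_reflection_of_ne hγ hθ hα hne.symm)

theorem inner_self_eq_coeff_mul_inner (h : IsSimpleSystem Φ Δ n) (hα : α ∈ Δ) (hθ : θ ∈ Φ)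
    (horth : ∀ γ ∈ Δ, γ ≠ α → ⟪θ, γ⟫ = 0) : ⟪θ, θ⟫ = n θ α * ⟪θ, α⟫ := by
  calc ⟪θ, θ⟫ = ⟪θ, ∑ γ ∈ Δ, (n θ γ : ℝ) • γ⟫ := by rw [← h.eq_sum θ hθ]
    _ = ∑ γ ∈ Δ, n θ γ * ⟪θ, γ⟫ := by simp only [inner_sum, real_inner_smul_right]
    _ = n θ α * ⟪θ, α⟫ :=
      Finset.sum_eq_single_of_mem α hα fun γ hγ hne ↦ by rw [horth γ hγ hne, mul_zero]

theorem ne_zero_of_coeff_ne_zero (h : IsSimpleSystem Φ Δ n) (hβ : β ∈ Φ) (hγ : γ ∈ Δ)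
    (hcoeff : n β γ ≠ 0) : β ≠ 0 := by
  intro hzero
  have hcoeff_zero := h.coeff_eq_of_eq_sum hβ (c := 0) (by simp [hzero]) hγ
  exact hcoeff (Int.cast_eq_zero.1 hcoeff_zero)

theorem cartanPairing_eq_one (h : IsSimpleSystem Φ Δ n) (hα : α ∈ Δ) (hθ : θ ∈ Φ)
    (hlong : ⟪θ, θ⟫ ≤ ⟪α, α⟫) (hθα : n θ α = 2) (hunique : ∀ β ∈ Φ, n β α = 2 → β = θ) :
    cartanPairing θ α = 1 := by
  have horth : ∀ γ ∈ Δ, γ ≠ α → ⟪θ, γ⟫ = 0 := fun γ hγ hne ↦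
    h.inner_eq_zero_of_unique_coeff hα hθ (by simpa only [hθα] using hunique) hγ hne
  have hθθ : ⟪θ, θ⟫ = cartanPairing θ α * ⟪α, α⟫ := by
    rw [cartanPairing_mul_inner_self, h.inner_self_eq_coeff_mul_inner hα hθ horth, hθα,
      Int.cast_ofNat]
  have hα_pos : 0 < ⟪α, α⟫ := real_inner_self_pos.2 (h.ne_zero hα)
  have hθ_pos : 0 < ⟪θ, θ⟫ :=
    real_inner_self_pos.2 (h.ne_zero_of_coeff_ne_zero hθ hα (by omega))
  have hpos : 0 < cartanPairing θ α := pos_of_mul_pos_left (hθθ ▸ hθ_pos) hα_pos.le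
  have hle : cartanPairing θ α ≤ 1 := le_of_mul_le_mul_right (by linarith) hα_pos
  obtain ⟨m, hm⟩ := h.exists_int_cartanPairing_eq hα hθ
  rw [hm] at hpos hle ⊢
  norm_cast at hpos hle ⊢
  omega

end IsSimpleSystem

theorem q_height_of_highest_root_contact_type_general
    {E : Type*} [NormedAddCommGroup E] [InnerProductSpace ℝ E]
    {Φ : Set E} {Δ : Finset E} {n : E → E → ℤ} (h : IsSimpleSystem Φ Δ n)
    {α θ : E} (hα : α ∈ Δ) (hlong : ∀ γ ∈ Φ, ⟪γ, γ⟫ ≤ ⟪α, α⟫)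
    (hθ : θ ∈ Φ) (hθα : n θ α = 2) (hunique : ∀ β ∈ Φ, n β α = 2 → β = θ) :
    ∑ γ ∈ insert α (dynkinNeighbors Δ α), n θ γ = 5 := by
  apply Int.cast_injective (α := ℝ)
  rw [h.sum_insert_dynkinNeighbors_coeff hα (fun γ hγ ↦ hlong γ (h.subset hγ)) hθ,
    h.cartanPairing_eq_one hα hθ (hlong θ hθ) hθα hunique, hθα]
  norm_num

/-- Let `Φ` be the root system of a finite-dimensional complex simple Lie algebra
(an irreducible reduced crystallographic root system) with base `Δ` and highest root `θ`,
and let `α ∈ Δ` be a long simple root such that `n_α(θ) = 2` and `θ` is the unique root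
`β ∈ Φ` with `n_α(β) = 2` (i.e. `(𝔤,α)` is of contact type).  Set `Σ_q := {α} ∪ N(α)`.
Then `ht_{Σ_q}(θ) = 5`, i.e. the sum of the coefficients in `θ` of the Dynkin neighbors of
`α` equals `3`. -/
theorem q_height_of_highest_root_contact_type
    {E : Type*} [NormedAddCommGroup E] [InnerProductSpace ℝ E]
    (Φ : Finset E)
    (hΦ0 : (0 : E) ∉ Φ)
    (hspan : Submodule.span ℝ (Φ : Set E) = ⊤)
    (hrefl : ∀ α ∈ Φ, ∀ β ∈ Φ, β - (2 * ⟪β, α⟫ / ⟪α, α⟫) • α ∈ Φ)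
    (hcrys : ∀ α ∈ Φ, ∀ β ∈ Φ, ∃ m : ℤ, 2 * ⟪β, α⟫ / ⟪α, α⟫ = (m : ℝ))
    (hred : ∀ α ∈ Φ, ∀ t : ℝ, t • α ∈ Φ → t = 1 ∨ t = -1)
    (hirr : ∀ S : Set E,
      (∀ β ∈ Φ, ∀ γ ∈ Φ, β ∈ S → ⟪β, γ⟫ ≠ 0 → γ ∈ S) →
      (∃ β ∈ Φ, β ∈ S) → ∀ β ∈ Φ, β ∈ S)
    (Δ : Finset E) (hΔΦ : (Δ : Set E) ⊆ (Φ : Set E))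
    (hΔli : LinearIndependent ℝ (fun γ : Δ => (γ : E)))
    (n : E → E → ℤ)
    (hn : ∀ β ∈ Φ, β = ∑ γ ∈ Δ, (n β γ : ℝ) • γ)
    (hsign : ∀ β ∈ Φ, (∀ γ ∈ Δ, 0 ≤ n β γ) ∨ (∀ γ ∈ Δ, n β γ ≤ 0))
    (α : E) (hαΔ : α ∈ Δ)
    (hlong : ∀ γ ∈ Φ, ⟪γ, γ⟫ ≤ ⟪α, α⟫)
    (Nbr : Finset E) (hNbr : Nbr = Δ.filter fun γ => γ ≠ α ∧ ⟪γ, α⟫ ≠ 0)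
    (Sq : Finset E) (hSq : Sq = insert α Nbr)
    (htq : E → ℤ) (hhtq : ∀ β, htq β = ∑ γ ∈ Sq, n β γ)
    -- `θ` is the highest root
    (θ : E) (hθΦ : θ ∈ Φ) (hθpos : ∀ γ ∈ Δ, 0 ≤ n θ γ)
    (hθhi : ∀ β ∈ Φ, ∀ γ ∈ Δ, n β γ ≤ n θ γ)
    -- `(𝔤, α)` is of contact type
    (hθα : n θ α = 2)
    (hunique : ∀ β ∈ Φ, n β α = 2 → β = θ) :
    htq θ = 5 := by
  subst hNbr hSq
  exact (hhtq θ).trans <| q_height_of_highest_root_contact_type_general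
    ⟨hΔΦ, hΔli, fun δ hδ ↦ hrefl δ (hΔΦ hδ), hn, hsign⟩ hαΔ hlong hθΦ hθα hunique
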